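/- arXiv:2305.02175 — 5 statements merged into one kernel-verified Lean document; each statement's English description precedes it below -/
import Mathlib

section
/- Let ℓ, m be natural numbers with m ≤ ℓ and let w ∈ ℂ. Then the (ℓ+m)-th derivative of the polynomial function w ↦ (w² − 1)^ℓ satisfies (d/dw)^{ℓ+m} (w² − 1)^ℓ = (ℓ+m)! · Σ_{k=0}^{ℓ−m} C(ℓ,k) · C(ℓ,m+k) · (w − 1)^{ℓ−m−k} · (w + 1)^k, where C(n,j) denotes the binomial coefficient. -/
open scoped Nat

/-!
Factor `w ^ 2 - 1 = (w - 1) * (w + 1)` and use divided (Hasse) derivatives `D⁽ⁿ⁾ = Dⁿ / n!`. The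
Leibniz rule for these carries no binomial coefficients, and `D⁽ⁱ⁾ (w - 1) ^ ℓ` is
`ℓ.choose i * (w - 1) ^ (ℓ - i)`, so the only factorial in the result is the `(ℓ + m)!` that
converts back to the ordinary derivative. The nonzero terms of the Leibniz sum over
`i + j = ℓ + m` have `i, j ≤ ℓ`; they are indexed by the exponent `k = ℓ - j` of `w + 1`, which
gives `i = m + k`.
-/

open Finset Polynomial

theorem sum_antidiagonal_choose_mul_choose_smul {M : Type*} [AddCommMonoid M]
    (f : ℕ → ℕ → M) (p q m : ℕ) :
    ∑ ij ∈ antidiagonal (q + m), (p.choose ij.1 * q.choose ij.2) • f (p - ij.1) (q - ij.2) =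
      ∑ k ∈ range (p - m + 1), (q.choose k * p.choose (m + k)) • f (p - m - k) k := by
  have le_and_le_of_ne_zero {i j : ℕ} {x : M} (h : (p.choose i * q.choose j) • x ≠ 0) :
      i ≤ p ∧ j ≤ q := by
    simpa only [mul_ne_zero_iff, Nat.choose_ne_zero_iff] using left_ne_zero_of_smul h
  refine sum_bij_ne_zero (fun ij _ _ ↦ q - ij.2) ?mem ?inj ?surj ?eq
  case mem =>
    rintro ⟨i, j⟩ hij hne
    obtain ⟨hi, hj⟩ := le_and_le_of_ne_zero hne
    simp only [HasAntidiagonal.mem_antidiagonal, mem_range] at *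
    omega
  case inj =>
    rintro ⟨i, j⟩ hij hne ⟨i', j'⟩ hij' hne' h
    have hj := (le_and_le_of_ne_zero hne).2
    have hj' := (le_and_le_of_ne_zero hne').2
    simp only [HasAntidiagonal.mem_antidiagonal, Prod.mk.injEq] at *
    omega
  case surj =>
    intro k _ hne
    rw [mul_comm] at hne
    have hk : k ≤ q := (le_and_le_of_ne_zero hne).2
    refine ⟨(m + k, q - k), HasAntidiagonal.mem_antidiagonal.2 (by omega), ?_, Nat.sub_sub_self hk⟩
    rwa [Nat.choose_symm hk, Nat.sub_sub_self hk, ← Nat.sub_sub]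
  case eq =>
    rintro ⟨i, j⟩ hij hne
    have hj : j ≤ q := (le_and_le_of_ne_zero hne).2
    have hij : i + j = q + m := HasAntidiagonal.mem_antidiagonal.1 hij
    obtain rfl : i = m + (q - j) := by omega
    rw [Nat.choose_symm hj, mul_comm, Nat.sub_sub]

section Semiring

variable {R : Type*} [Semiring R]

theorem hasseDeriv_X_add_C_pow (n k : ℕ) (c : R) :
    hasseDeriv k ((X + C c) ^ n) = n.choose k • (X + C c) ^ (n - k) := by
  ext j
  have choose_mul_choose : (j + k).choose k * n.choose (j + k) = n.choose k * (n - k).choose j := by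
    rw [mul_comm, Nat.choose_mul (Nat.le_add_left k j), Nat.add_sub_cancel]
  rw [hasseDeriv_coeff, coeff_smul, coeff_X_add_C_pow, coeff_X_add_C_pow]
  calc ((j + k).choose k : R) * (c ^ (n - (j + k)) * (n.choose (j + k) : R))
      = ((j + k).choose k * n.choose (j + k) : ℕ) * c ^ (n - (j + k)) := by
        rw [← (Nat.cast_commute _ _).eq, Nat.cast_mul, mul_assoc]
    _ = (n.choose k * (n - k).choose j : ℕ) * c ^ (n - k - j) := by
        rw [choose_mul_choose, Nat.sub_sub, add_comm j k]
    _ = n.choose k • (c ^ (n - k - j) * ((n - k).choose j : R)) := by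
        rw [← (Nat.cast_commute _ _).eq, nsmul_eq_mul, Nat.cast_mul, mul_assoc]

theorem hasseDeriv_X_add_C_pow_mul_X_add_C_pow (p q m : ℕ) (a b : R) :
    hasseDeriv (q + m) ((X + C a) ^ p * (X + C b) ^ q) =
      ∑ k ∈ range (p - m + 1),
        (q.choose k * p.choose (m + k)) • ((X + C a) ^ (p - m - k) * (X + C b) ^ k) := by
  simp only [hasseDeriv_mul, hasseDeriv_X_add_C_pow, smul_mul_smul_comm]
  exact sum_antidiagonal_choose_mul_choose_smul (fun i j ↦ (X + C a) ^ i * (X + C b) ^ j) p q m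

end Semiring

section NontriviallyNormedField

variable {𝕜 : Type*} [NontriviallyNormedField 𝕜]

theorem iteratedDeriv_polynomial_eval (n : ℕ) (p : 𝕜[X]) :
    iteratedDeriv n (fun x ↦ p.eval x) = fun x ↦ (derivative^[n] p).eval x := by
  induction n generalizing p with
  | zero => simp only [iteratedDeriv_zero, Function.iterate_zero_apply]
  | succ n ih =>
    have deriv_eval : deriv (fun x ↦ p.eval x) = fun x ↦ p.derivative.eval x :=
      funext fun _ ↦ p.deriv
    rw [iteratedDeriv_succ', deriv_eval, ih, Function.iterate_succ_apply]

theorem iteratedDeriv_add_pow_mul_add_pow (p q m : ℕ) (a b x : 𝕜) :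
    iteratedDeriv (q + m) (fun x ↦ (x + a) ^ p * (x + b) ^ q) x =
      ((q + m)! : 𝕜) * ∑ k ∈ range (p - m + 1),
        (q.choose k : 𝕜) * (p.choose (m + k) : 𝕜) * (x + a) ^ (p - m - k) * (x + b) ^ k := by
  have eval_eq : (fun x ↦ (x + a) ^ p * (x + b) ^ q) =
      fun x ↦ ((X + C a) ^ p * (X + C b) ^ q).eval x := by
    simp only [eval_mul, eval_pow, eval_add, eval_X, eval_C]
  rw [eval_eq, iteratedDeriv_polynomial_eval, ← factorial_smul_hasseDeriv, LinearMap.smul_apply,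
    hasseDeriv_X_add_C_pow_mul_X_add_C_pow]
  simp only [nsmul_eq_mul, Nat.cast_mul, mul_assoc, eval_finsetSum, eval_mul, eval_pow, eval_add,
    eval_X, eval_C, eval_natCast]

theorem deriv_pow_sq_sub_one_general (ℓ m : ℕ) (w : 𝕜) :
    iteratedDeriv (ℓ + m) (fun w : 𝕜 ↦ (w ^ 2 - 1) ^ ℓ) w =
      ((ℓ + m)! : 𝕜) *
        ∑ k ∈ range (ℓ - m + 1),
          (ℓ.choose k : 𝕜) * (ℓ.choose (m + k) : 𝕜) * (w - 1) ^ (ℓ - m - k) * (w + 1) ^ k := by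
  have factor : (fun w : 𝕜 ↦ (w ^ 2 - 1) ^ ℓ) = fun w ↦ (w + -1) ^ ℓ * (w + 1) ^ ℓ := by
    funext w
    rw [← mul_pow]
    ring
  rw [factor, iteratedDeriv_add_pow_mul_add_pow, ← sub_eq_add_neg]

end NontriviallyNormedField

/-- For natural numbers `m ≤ ℓ` and `w ∈ ℂ`, the `(ℓ+m)`-th complex
derivative of `w ↦ (w² − 1)^ℓ` equals
`(ℓ+m)! · Σ_{k=0}^{ℓ−m} C(ℓ,k) C(ℓ,m+k) (w−1)^{ℓ−m−k} (w+1)^k`. -/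
theorem deriv_pow_sq_sub_one (ℓ m : ℕ) (hm : m ≤ ℓ) (w : ℂ) :
    iteratedDeriv (ℓ + m) (fun w : ℂ => (w ^ 2 - 1) ^ ℓ) w =
      ((ℓ + m)! : ℂ) *
        ∑ k ∈ Finset.range (ℓ - m + 1),
          (ℓ.choose k : ℂ) * (ℓ.choose (m + k) : ℂ) * (w - 1) ^ (ℓ - m - k) * (w + 1) ^ k :=
  deriv_pow_sq_sub_one_general ℓ m w
end

section
/- Let ℓ, m be natural numbers with m ≤ ℓ. Then for every real z ≥ 1, √π · (ℓ−m)! · P_ℓ^m(z) / (2^ℓ · Γ(ℓ + 1/2)) ≤ ((z − 1)/(z + 1))^{m/2} · (z + 1)^ℓ, where ((z−1)/(z+1))^{m/2} is the real power (equal to 0 when z = 1 and m > 0). -/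
open scoped Nat

/-- The associated Legendre function of degree `ℓ` and order `m`, for real `z ≥ 1`:
`P_ℓ^m(z) = (1/(2^ℓ ℓ!)) (z²−1)^{m/2} (d/dx)^{ℓ+m} (x²−1)^ℓ |_{x=z}`,
with `(z²−1)^{m/2}` the real power. -/
noncomputable def assocLegendre (ℓ m : ℕ) (z : ℝ) : ℝ :=
  (1 / (2 ^ ℓ * (ℓ ! : ℝ))) * (z ^ 2 - 1) ^ ((m : ℝ) / 2) *
    iteratedDeriv (ℓ + m) (fun x : ℝ => (x ^ 2 - 1) ^ ℓ) z

/-!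
Differentiate `(x² - 1)^ℓ = (x - 1)^ℓ (x + 1)^ℓ` by the Leibniz rule. For `x ≥ 1` each term is
a nonnegative multiple of powers of `x - 1` and `x + 1`, so it only grows when `x - 1` is
replaced by `x + 1`; the enlarged sum is the Leibniz expansion of the derivative of `(x + 1)^(2ℓ)`.
The constants match by Legendre's duplication formula for `Γ(ℓ + 1/2)`.
-/

theorem iteratedDeriv_sub_const_pow {𝕜 : Type*} [NontriviallyNormedField 𝕜] (a x : 𝕜) (n k : ℕ) :
    iteratedDeriv k (fun y : 𝕜 => (y - a) ^ n) x = n.descFactorial k * (x - a) ^ (n - k) := by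
  simp only [iteratedDeriv_comp_sub_const k (· ^ n) a, iteratedDeriv_pow]

theorem iteratedDeriv_sub_pow_mul_sub_pow_le {a b x : ℝ} (hba : b ≤ a) (hax : a ≤ x)
    (p q k : ℕ) :
    iteratedDeriv k (fun y : ℝ => (y - a) ^ p * (y - b) ^ q) x ≤
      (p + q).descFactorial k * (x - b) ^ (p + q - k) := by
  have : 0 ≤ x - a := sub_nonneg.2 hax
  have hxb : 0 ≤ x - b := sub_nonneg.2 (hba.trans hax)
  rw [← iteratedDeriv_sub_const_pow]
  simp only [pow_add]
  rw [iteratedDeriv_fun_mul (by fun_prop) (by fun_prop),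
    iteratedDeriv_fun_mul (by fun_prop) (by fun_prop)]
  simp only [iteratedDeriv_sub_const_pow]
  gcongr

theorem iteratedDeriv_sq_sub_one_pow_le {z : ℝ} (hz : 1 ≤ z) (n k : ℕ) :
    iteratedDeriv k (fun x : ℝ => (x ^ 2 - 1) ^ n) z ≤
      (2 * n).descFactorial k * (z + 1) ^ (2 * n - k) := by
  have factor_eq : (fun x : ℝ => (x ^ 2 - 1) ^ n) = fun x => (x - 1) ^ n * (x - -1) ^ n := by
    ext x
    rw [← mul_pow]
    ring
  rw [factor_eq, two_mul, ← sub_neg_eq_add z 1]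
  exact iteratedDeriv_sub_pow_mul_sub_pow_le (by norm_num) hz n n k

theorem mul_rpow_half_eq_div_rpow_half_mul_rpow {a b : ℝ} (ha : 0 ≤ a) (hb : 0 < b) (s : ℝ) :
    (a * b) ^ (s / 2) = (a / b) ^ (s / 2) * b ^ s := by
  have hab : a * b = a / b * b ^ (2 : ℝ) := by
    rw [Real.rpow_two]
    field_simp
  rw [hab, Real.mul_rpow (by positivity) (by positivity), ← Real.rpow_mul hb.le,
    mul_div_cancel₀ s two_ne_zero]

theorem two_pow_mul_Gamma_nat_add_half (n : ℕ) :
    2 ^ n * Real.Gamma ((n : ℝ) + 1 / 2) = √Real.pi * ((2 * n)! / (2 ^ n * n !)) := by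
  have duplication := Real.Gamma_mul_Gamma_add_half ((n : ℝ) + 1 / 2)
  rw [show (n : ℝ) + 1 / 2 + 1 / 2 = n + 1 by ring,
    show 2 * ((n : ℝ) + 1 / 2) = (2 * n : ℕ) + 1 by push_cast; ring,
    show 1 - (((2 * n : ℕ) : ℝ) + 1) = -(2 * n : ℕ) by ring,
    Real.Gamma_nat_eq_factorial, Real.Gamma_nat_eq_factorial, Real.rpow_neg zero_le_two,
    Real.rpow_natCast, two_mul, pow_add] at duplication
  rw [two_mul]
  field_simp at duplication ⊢
  linarith

theorem factorial_mul_assocLegendre_le {ℓ m : ℕ} (hm : m ≤ ℓ) {z : ℝ} (hz : 1 ≤ z) :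
    (ℓ - m)! * assocLegendre ℓ m z ≤
      (2 * ℓ)! / (2 ^ ℓ * ℓ !) * (((z - 1) / (z + 1)) ^ ((m : ℝ) / 2) * (z + 1) ^ ℓ) := by
  have hz₀ : 0 ≤ z - 1 := sub_nonneg.2 hz
  have hz₁ : 0 < z + 1 := by linarith
  have rpow_split : (z ^ 2 - 1) ^ ((m : ℝ) / 2) =
      ((z - 1) / (z + 1)) ^ ((m : ℝ) / 2) * (z + 1) ^ m := by
    rw [show z ^ 2 - 1 = (z - 1) * (z + 1) by ring,
      mul_rpow_half_eq_div_rpow_half_mul_rpow hz₀ hz₁, Real.rpow_natCast]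
  have exponent_eq : 2 * ℓ - (ℓ + m) = ℓ - m := by lia
  have factorial_eq : ((ℓ - m)! : ℝ) * (2 * ℓ).descFactorial (ℓ + m) = (2 * ℓ)! := by
    rw [← exponent_eq]
    exact_mod_cast Nat.factorial_mul_descFactorial (by lia : ℓ + m ≤ 2 * ℓ)
  have deriv_le := iteratedDeriv_sq_sub_one_pow_le hz ℓ (ℓ + m)
  rw [exponent_eq] at deriv_le
  calc ((ℓ - m)! : ℝ) * assocLegendre ℓ m z
      ≤ (ℓ - m)! * (1 / (2 ^ ℓ * ℓ !) *
          (((z - 1) / (z + 1)) ^ ((m : ℝ) / 2) * (z + 1) ^ m) *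
            ((2 * ℓ).descFactorial (ℓ + m) * (z + 1) ^ (ℓ - m))) := by
        rw [assocLegendre, rpow_split]
        gcongr
    _ = (2 * ℓ)! / (2 ^ ℓ * ℓ !) * (((z - 1) / (z + 1)) ^ ((m : ℝ) / 2) * (z + 1) ^ ℓ) := by
        rw [← factorial_eq, ← pow_mul_pow_sub (z + 1) hm]
        ring

/-- For `m ≤ ℓ` and real `z ≥ 1`,
`√π (ℓ−m)! P_ℓ^m(z) / (2^ℓ Γ(ℓ+1/2)) ≤ ((z−1)/(z+1))^{m/2} (z+1)^ℓ`,
where `((z−1)/(z+1))^{m/2}` is a real power (sharper upper bound from the proof of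
Lemma 5.2 of the paper). -/
theorem assocLegendre_sharp_upper_bound (ℓ m : ℕ) (hm : m ≤ ℓ) (z : ℝ) (hz : 1 ≤ z) :
    Real.sqrt Real.pi * ((ℓ - m)! : ℝ) * assocLegendre ℓ m z /
        (2 ^ ℓ * Real.Gamma ((ℓ : ℝ) + 1 / 2)) ≤
      ((z - 1) / (z + 1)) ^ ((m : ℝ) / 2) * (z + 1) ^ ℓ := by
  rw [two_pow_mul_Gamma_nat_add_half, mul_assoc, mul_div_mul_left _ _ (by positivity),
    div_le_iff₀' (by positivity)]
  exact factorial_mul_assocLegendre_le hm hz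
end

section
/- Let ℓ be a natural number, z ≥ 1 real, θ ∈ [0, π] and φ ∈ ℝ. Then P_ℓ(z) · 𝖯_ℓ(cos θ) + 2 · Σ_{m=1}^{ℓ} ((ℓ−m)!/(ℓ+m)!) · i^{−m} · P_ℓ^m(z) · 𝖯_ℓ^m(cos θ) · cos(m φ) = P_ℓ( z·cos θ + i·√(z² − 1)·sin θ·cos φ ), where the right-hand side is the Legendre polynomial P_ℓ evaluated at the indicated complex argument. -/
open scoped Nat

/-- The Legendre polynomial of degree `ℓ`, regarded as an entire function on `ℂ`:
`P_ℓ(w) = (1/(2^ℓ ℓ!)) (d/dw)^ℓ (w²−1)^ℓ`. -/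
noncomputable def legendreC (ℓ : ℕ) (w : ℂ) : ℂ :=
  (1 / (2 ^ ℓ * (ℓ ! : ℂ))) * iteratedDeriv ℓ (fun w : ℂ => (w ^ 2 - 1) ^ ℓ) w

/-- The Ferrers function of degree `ℓ` and order `m`, for `x ∈ [−1,1]`:
`𝖯_ℓ^m(x) = ((−1)^m/(2^ℓ ℓ!)) (1−x²)^{m/2} (d/dt)^{ℓ+m} (t²−1)^ℓ |_{t=x}`. -/
noncomputable def ferrers (ℓ m : ℕ) (x : ℝ) : ℝ :=
  ((-1 : ℝ) ^ m / (2 ^ ℓ * (ℓ ! : ℝ))) * (1 - x ^ 2) ^ ((m : ℝ) / 2) *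
    iteratedDeriv (ℓ + m) (fun t : ℝ => (t ^ 2 - 1) ^ ℓ) x

/-!
The idea is the invariant theory of binary forms. The coefficients of `(αX² + 2xX + β)^ℓ` with
`αβ = x² - 1` are, up to powers of `α` and `β`, the divided derivatives of `(w² - 1)^ℓ` at `x`, and
likewise for `γX² + 2yX + δ = (pX + q)(p'X + q')` with `γδ = y² - 1`. The apolar pairing of the two
powers produces the left-hand side of the addition theorem. Transposing the substitution
`(p, q; p', q')` onto the first factor turns that pairing into the central coefficient of the power
of another quadratic with the same normalisation up to a factor, whose middle coefficient is
governed by `xy + (αγ + βδ)/2`. Choosing `α, β = √(z² - 1) e^{±iϕ}` and `γ = δ = i sin θ`, with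
`y = cos θ`, gives the argument `z cos θ + i √(z² - 1) sin θ cos ϕ`.
-/

open Finset Polynomial

lemma sum_antidiagonal_add_self {M : Type*} [AddCommMonoid M] (n : ℕ) (f : ℕ → ℕ → M) :
    ∑ ij ∈ antidiagonal (n + n), f ij.1 ij.2 =
      f n n + ∑ m ∈ Icc 1 n, (f (n + m) (n - m) + f (n - m) (n + m)) := by
  induction n generalizing f with
  | zero => simp
  | succ n ih =>
    have hshift : ∀ m ∈ Icc 1 n, f (n + m + 1) (n - m + 1) + f (n - m + 1) (n + m + 1) =
        f (n + 1 + m) (n + 1 - m) + f (n + 1 - m) (n + 1 + m) := fun m hm ↦ by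
      rw [Nat.succ_sub (mem_Icc.mp hm).2, Nat.add_right_comm]
    rw [show n + 1 + (n + 1) = n + n + 2 by ring, Nat.antidiagonal_succ_succ', sum_cons, sum_cons,
      sum_map, sum_Icc_succ_top (by omega), ← sum_congr rfl hshift, Nat.sub_self,
      show n + 1 + (n + 1) = n + n + 2 by ring]
    have hinner := ih fun i j ↦ f (i + 1) (j + 1)
    simp only [Function.Embedding.coe_prodMap, Prod.map, Function.Embedding.coeFn_mk,
      Nat.succ_eq_add_one, hinner]
    abel

section BinaryForms

variable {R : Type*} [CommSemiring R]

lemma coeff_C_mul_X_add_C_pow (p q : R) (n k : ℕ) :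
    ((C p * X + C q) ^ n).coeff k = n.choose k * p ^ k * q ^ (n - k) := by
  have hcomp : (C p * X + C q) ^ n = ((X + C q) ^ n).comp (C p * X) := by simp
  rw [hcomp, comp_C_mul_X_coeff, coeff_X_add_C_pow]
  ring

lemma factorial_mul_factorial_mul_choose_mul_choose (i j r s : ℕ) :
    (i + j)! * (r + s)! * ((i + r).choose i * (j + s).choose j) =
      (i + r)! * (j + s)! * ((i + j).choose i * (r + s).choose r) := by
  have hrow := Nat.add_choose_mul_factorial_mul_factorial i j
  have hrow' := Nat.add_choose_mul_factorial_mul_factorial r s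
  have hcol := Nat.add_choose_mul_factorial_mul_factorial i r
  have hcol' := Nat.add_choose_mul_factorial_mul_factorial j s
  rw [Nat.choose_symm_add (a := i) (b := r), Nat.choose_symm_add (a := i) (b := j),
    Nat.choose_symm_add (a := j), Nat.choose_symm_add (a := r), ← hrow, ← hrow', ← hcol, ← hcol']
  ring

lemma factorial_mul_coeff_linear_pow_mul_linear_pow (p q p' q' : R) {l l' k k' : ℕ}
    (h : k + k' = l + l') :
    (k ! * k' ! : R) * ((C p * X + C q) ^ l * (C p' * X + C q') ^ l').coeff k =
      l ! * l' ! * ((C p * X + C p') ^ k * (C q * X + C q') ^ k').coeff l := by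
  have hexpand : (C p * X + C q) ^ l =
      ∑ ir ∈ antidiagonal l, C (l.choose ir.1 * p ^ ir.1 * q ^ ir.2) * X ^ ir.1 := by
    rw [(Commute.all _ _).add_pow']
    refine sum_congr rfl fun ir _ ↦ ?_
    simp only [nsmul_eq_mul, C_mul, C_pow, map_natCast]
    ring
  rw [hexpand, sum_mul, finsetSum_coeff, coeff_mul, mul_sum, mul_sum]
  refine sum_congr rfl fun ⟨i, r⟩ hir ↦ ?_
  obtain rfl : i + r = l := mem_antidiagonal.mp hir
  rw [mul_assoc (C _), coeff_C_mul, coeff_X_pow_mul']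
  simp only [coeff_C_mul_X_add_C_pow]
  split_ifs with hik
  · obtain ⟨j, rfl⟩ := Nat.exists_eq_add_of_le hik
    rw [Nat.add_sub_cancel_left]
    obtain hrk | hrk := le_or_gt r k'
    · obtain ⟨s, rfl⟩ := Nat.exists_eq_add_of_le hrk
      obtain rfl : l' = j + s := by omega
      have hfact := congrArg (Nat.cast (R := R))
        (factorial_mul_factorial_mul_choose_mul_choose i j r s)
      push_cast at hfact
      rw [Nat.add_sub_cancel_left, Nat.add_sub_cancel_left]
      calc _ = ((i + j)! * (r + s)! * ((i + r).choose i * (j + s).choose j) : R) *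
            (p ^ i * q ^ r * p' ^ j * q' ^ s) := by ring
        _ = _ := by rw [hfact]; ring
    · simp [Nat.choose_eq_zero_of_lt hrk, Nat.choose_eq_zero_of_lt (show l' < j by omega)]
  · simp [Nat.choose_eq_zero_of_lt (not_le.mp hik)]

lemma aeval_homogenize {A : Type*} [CommSemiring A] [Algebra R A] (f : R[X]) (n : ℕ) (u v : A) :
    MvPolynomial.aeval ![u, v] (f.homogenize n) =
      ∑ ij ∈ antidiagonal n, f.coeff ij.1 • (u ^ ij.1 * v ^ ij.2) := by
  rw [homogenize, map_sum]
  refine sum_congr rfl fun ij _ ↦ ?_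
  simp [MvPolynomial.aeval_monomial, Finsupp.prod_fintype, Algebra.smul_def]

lemma homogenize_pow {f : R[X]} {d : ℕ} (hf : f.natDegree ≤ d) (n : ℕ) :
    (f ^ n).homogenize (n * d) = f.homogenize d ^ n := by
  simpa using homogenize_finsetProd (s := range n) (p := fun _ ↦ f) (n := fun _ ↦ d)
    fun _ _ ↦ hf

lemma aeval_homogenize_quadratic_pow {A : Type*} [CommSemiring A] [Algebra R A] (a b c : R)
    (n : ℕ) (u v : A) :
    MvPolynomial.aeval ![u, v] (((C a * X ^ 2 + C b * X + C c) ^ n).homogenize (n * 2)) =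
      (a • u ^ 2 + b • (u * v) + c • v ^ 2) ^ n := by
  rw [homogenize_pow natDegree_quadratic_le, map_pow]
  simp [Algebra.smul_def]

-- The apolar pairing `∑ i! j! fᵢ gᵢ` on binary forms turns a linear substitution in one argument
-- into the transposed substitution in the other; here `g` is the image of the monomial `Xˡ`.
lemma sum_factorial_mul_coeff_mul_coeff_linear_pow (f : R[X]) (p q p' q' : R) (l l' : ℕ) :
    ∑ ij ∈ antidiagonal (l + l'), (ij.1 ! * ij.2 ! : R) * f.coeff ij.1 *
        ((C p * X + C q) ^ l * (C p' * X + C q') ^ l').coeff ij.1 =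
      l ! * l' ! * (MvPolynomial.aeval ![C p * X + C p', C q * X + C q']
        (f.homogenize (l + l'))).coeff l := by
  rw [aeval_homogenize, finsetSum_coeff, mul_sum]
  refine sum_congr rfl fun ij hij ↦ ?_
  have hrec := factorial_mul_coeff_linear_pow_mul_linear_pow p q p' q' (mem_antidiagonal.mp hij)
  rw [coeff_smul, smul_eq_mul]
  calc _ = f.coeff ij.1 * ((ij.1 ! * ij.2 ! : R) *
        ((C p * X + C q) ^ l * (C p' * X + C q') ^ l').coeff ij.1) := by ring
    _ = _ := by rw [hrec]; ring

lemma coeff_quadratic_pow_add (a b c : R) (n m : ℕ) :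
    ((C a * X ^ 2 + C b * X + C c) ^ n).coeff (n + m) =
      a ^ m * ((X ^ 2 + C b * X + C (a * c)) ^ n).coeff (n + m) := by
  have hexpand (a c : R) : (C a * X ^ 2 + C b * X + C c) ^ n =
      ∑ ij ∈ antidiagonal n,
        C (n.choose ij.1 * c ^ ij.2) * (X ^ ij.1 * (C a * X + C b) ^ ij.1) := by
    rw [show C a * X ^ 2 + C b * X + C c = X * (C a * X + C b) + C c by ring,
      (Commute.all _ _).add_pow']
    refine sum_congr rfl fun ij _ ↦ ?_
    simp only [nsmul_eq_mul, C_mul, C_pow, map_natCast, mul_pow]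
    ring
  have hmonic : X ^ 2 + C b * X + C (a * c) = C 1 * X ^ 2 + C b * X + C (a * c) := by simp
  rw [hmonic, hexpand, hexpand, finsetSum_coeff, finsetSum_coeff, mul_sum]
  refine sum_congr rfl fun ⟨i, j⟩ hij ↦ ?_
  obtain rfl : i + j = n := mem_antidiagonal.mp hij
  have hdeg : i + j + m = (j + m) + i := by ring
  rw [coeff_C_mul, coeff_C_mul, hdeg, coeff_X_pow_mul, coeff_X_pow_mul]
  simp only [coeff_C_mul_X_add_C_pow]
  ring

lemma coeff_quadratic_pow_sub (a b c : R) {n m : ℕ} (hm : m ≤ n) :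
    ((C a * X ^ 2 + C b * X + C c) ^ n).coeff (n - m) =
      ((C c * X ^ 2 + C b * X + C a) ^ n).coeff (n + m) := by
  have hswap := aeval_homogenize_quadratic_pow a b c n (1 : R[X]) X
  rw [aeval_homogenize] at hswap
  have hcoeff := congrArg (coeff · (n + m)) hswap
  simp only [one_pow, one_mul, smul_eq_C_mul, finsetSum_coeff, coeff_C_mul_X_pow] at hcoeff
  rw [sum_eq_single_of_mem (n - m, n + m) (by simp; omega)] at hcoeff
  · rw [if_pos rfl] at hcoeff
    rw [hcoeff]
    congr 2
    ring
  · rintro ⟨i, j⟩ hij hne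
    rw [HasAntidiagonal.mem_antidiagonal] at hij
    refine if_neg fun h ↦ hne ?_
    simp only [Prod.mk.injEq] at h ⊢
    omega

end BinaryForms

section RodriguesCoeff

/-- The divided derivative `(1/k!) (d/dw)^k (w² - 1)^n`, encoded as a Taylor coefficient so that it
makes sense over every commutative ring. All Legendre functions of degree `n` are multiples of
such derivatives. -/
noncomputable def rodriguesCoeff {R : Type*} [CommRing R] (n k : ℕ) (w : R) : R :=
  (taylor w ((X ^ 2 - 1) ^ n)).coeff k

lemma map_rodriguesCoeff {R S : Type*} [CommRing R] [CommRing S] (g : R →+* S) (n k : ℕ) (w : R) :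
    g (rodriguesCoeff n k w) = rodriguesCoeff n k (g w) := by
  rw [rodriguesCoeff, rodriguesCoeff, ← coeff_map, map_taylor]
  simp

variable {R : Type*} [CommRing R]

lemma rodriguesCoeff_eq_coeff_quadratic_pow (n k : ℕ) (w : R) :
    rodriguesCoeff n k w = ((X ^ 2 + C (2 * w) * X + C (w ^ 2 - 1)) ^ n).coeff k := by
  rw [rodriguesCoeff, taylor_pow]
  congr 2
  simp only [map_sub, taylor_pow, taylor_X, taylor_one, C_mul, C_pow, C_1, C_ofNat]
  ring

lemma coeff_quadratic_pow_add_eq_rodriguesCoeff {a c w : R} (h : a * c = w ^ 2 - 1) (n m : ℕ) :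
    ((C a * X ^ 2 + C (2 * w) * X + C c) ^ n).coeff (n + m) =
      a ^ m * rodriguesCoeff n (n + m) w := by
  rw [coeff_quadratic_pow_add, h, rodriguesCoeff_eq_coeff_quadratic_pow]

lemma coeff_quadratic_pow_sub_eq_rodriguesCoeff {a c w : R} (h : a * c = w ^ 2 - 1) {n m : ℕ}
    (hm : m ≤ n) :
    ((C a * X ^ 2 + C (2 * w) * X + C c) ^ n).coeff (n - m) =
      c ^ m * rodriguesCoeff n (n + m) w := by
  rw [coeff_quadratic_pow_sub _ _ _ hm,
    coeff_quadratic_pow_add_eq_rodriguesCoeff (by rw [mul_comm, h])]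

lemma coeff_quadratic_pow_self_eq_two_pow_mul_rodriguesCoeff {a c w : R}
    (h : a * c = 4 * (w ^ 2 - 1)) (n : ℕ) :
    ((C a * X ^ 2 + C (4 * w) * X + C c) ^ n).coeff n = 2 ^ n * rodriguesCoeff n n w := by
  have hdouble : C 2 * X ^ 2 + C (4 * w) * X + C (2 * (w ^ 2 - 1)) =
      C 2 * (X ^ 2 + C (2 * w) * X + C (w ^ 2 - 1)) := by
    simp only [C_mul, C_ofNat]
    ring
  have hprod : a * c = 2 * (2 * (w ^ 2 - 1)) := by rw [h]; ring
  -- The central coefficient depends on `a` and `c` only through `a * c`.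
  have hcentral (a c : R) := coeff_quadratic_pow_add a (4 * w) c n 0
  simp only [add_zero, pow_zero, one_mul] at hcentral
  rw [hcentral, hprod, ← hcentral, hdouble, mul_pow, ← C_pow, coeff_C_mul,
    rodriguesCoeff_eq_coeff_quadratic_pow]

lemma coeff_subst_quadratic_pow_eq_rodriguesCoeff {α β x p q p' q' y w : R}
    (hx : α * β = x ^ 2 - 1) (hpq' : p * q' = y + 1) (hp'q : p' * q = y - 1)
    (hw : 2 * w = 2 * x * y + α * (p * p') + β * (q * q')) (n : ℕ) :
    ((α • (C p * X + C p') ^ 2 + (2 * x) • ((C p * X + C p') * (C q * X + C q')) +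
        β • (C q * X + C q') ^ 2) ^ n).coeff n = 2 ^ n * rodriguesCoeff n n w := by
  have hmid : 4 * w = 2 * α * (p * p') + 2 * x * (p * q' + p' * q) + 2 * β * (q * q') := by
    linear_combination 2 * hw - 2 * x * (hpq' + hp'q)
  have hsubst : α • (C p * X + C p') ^ 2 + (2 * x) • ((C p * X + C p') * (C q * X + C q')) +
        β • (C q * X + C q') ^ 2 =
      C (α * p ^ 2 + 2 * x * (p * q) + β * q ^ 2) * X ^ 2 + C (4 * w) * X +
        C (α * p' ^ 2 + 2 * x * (p' * q') + β * q' ^ 2) := by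
    rw [hmid]
    simp only [smul_eq_C_mul, C_add, C_mul, C_pow, C_ofNat]
    ring
  -- The substitution multiplies the discriminant by its squared determinant `(p q' - p' q)² = 4`.
  have hdisc : (α * p ^ 2 + 2 * x * (p * q) + β * q ^ 2) *
      (α * p' ^ 2 + 2 * x * (p' * q') + β * q' ^ 2) = 4 * (w ^ 2 - 1) :=
    calc _ = (x * (p * q' + p' * q) + α * (p * p') + β * (q * q')) ^ 2 -
          (x ^ 2 - α * β) * (p * q' - p' * q) ^ 2 := by ring
      _ = (2 * w) ^ 2 - 4 := by rw [hw, hx, hpq', hp'q]; ring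
      _ = _ := by ring
  rw [hsubst, coeff_quadratic_pow_self_eq_two_pow_mul_rodriguesCoeff hdisc]

lemma rodriguesCoeff_addition {α β x p q p' q' y w : R} (hx : α * β = x ^ 2 - 1)
    (hpq' : p * q' = y + 1) (hp'q : p' * q = y - 1)
    (hw : 2 * w = 2 * x * y + α * (p * p') + β * (q * q')) (n : ℕ) :
    n ! * n ! * (rodriguesCoeff n n x * rodriguesCoeff n n y) +
        ∑ m ∈ Icc 1 n, (n + m)! * (n - m)! * ((α * (p * p')) ^ m + (β * (q * q')) ^ m) *
          (rodriguesCoeff n (n + m) x * rodriguesCoeff n (n + m) y) =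
      n ! * n ! * (2 ^ n * rodriguesCoeff n n w) := by
  have hy : p * p' * (q * q') = y ^ 2 - 1 := by
    linear_combination (p' * q) * hpq' + (y + 1) * hp'q
  have hfactor : (C p * X + C q) ^ n * (C p' * X + C q') ^ n =
      (C (p * p') * X ^ 2 + C (2 * y) * X + C (q * q')) ^ n := by
    rw [← mul_pow, show 2 * y = p * q' + p' * q by rw [hpq', hp'q]; ring]
    simp only [C_add, C_mul]
    ring
  have hpairing := sum_factorial_mul_coeff_mul_coeff_linear_pow
    ((C α * X ^ 2 + C (2 * x) * X + C β) ^ n) p q p' q' n n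
  rw [hfactor, ← mul_two n, aeval_homogenize_quadratic_pow,
    coeff_subst_quadratic_pow_eq_rodriguesCoeff hx hpq' hp'q hw, mul_two,
    sum_antidiagonal_add_self (M := R) n fun i j ↦ (i ! * j ! : R) *
      ((C α * X ^ 2 + C (2 * x) * X + C β) ^ n : R[X]).coeff i *
      ((C (p * p') * X ^ 2 + C (2 * y) * X + C (q * q')) ^ n : R[X]).coeff i] at hpairing
  rw [← hpairing]
  congr 1
  · have hcx := coeff_quadratic_pow_add_eq_rodriguesCoeff hx n 0
    have hcy := coeff_quadratic_pow_add_eq_rodriguesCoeff hy n 0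
    simp only [add_zero, pow_zero, one_mul] at hcx hcy
    rw [hcx, hcy]
    ring
  · refine sum_congr rfl fun m hm ↦ ?_
    have hmn := (mem_Icc.mp hm).2
    rw [coeff_quadratic_pow_add_eq_rodriguesCoeff hx, coeff_quadratic_pow_add_eq_rodriguesCoeff hy,
      coeff_quadratic_pow_sub_eq_rodriguesCoeff hx hmn,
      coeff_quadratic_pow_sub_eq_rodriguesCoeff hy hmn]
    ring

end RodriguesCoeff

open Complex in
lemma rodriguesCoeff_addition_cos (n : ℕ) {x a : ℂ} (ha : a ^ 2 = x ^ 2 - 1) (θ ϕ : ℂ) :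
    n ! * n ! * (rodriguesCoeff n n x * rodriguesCoeff n n (cos θ)) +
        ∑ m ∈ Icc 1 n, (n + m)! * (n - m)! *
          (2 * (a * (I * sin θ)) ^ m * cos (m * ϕ)) *
          (rodriguesCoeff n (n + m) x * rodriguesCoeff n (n + m) (cos θ)) =
      n ! * n ! * (2 ^ n * rodriguesCoeff n n (x * cos θ + I * (a * sin θ * cos ϕ))) := by
  have hcos : cos θ = 2 * cos (θ / 2) ^ 2 - 1 := by
    rw [← cos_two_mul, mul_div_cancel₀ θ two_ne_zero]
  have hsin : sin θ = 2 * sin (θ / 2) * cos (θ / 2) := by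
    rw [← sin_two_mul, mul_div_cancel₀ θ two_ne_zero]
  have hexp : exp (ϕ * I) * exp (-ϕ * I) = 1 := by
    rw [← exp_add]
    simp
  have hpp' : 2 * cos (θ / 2) * (I * sin (θ / 2)) = I * sin θ := by rw [hsin]; ring
  have hqq' : 2 * I * sin (θ / 2) * cos (θ / 2) = I * sin θ := by rw [hsin]; ring
  have hadd := rodriguesCoeff_addition (α := a * exp (ϕ * I)) (β := a * exp (-ϕ * I)) (x := x)
    (p := 2 * cos (θ / 2)) (q := 2 * I * sin (θ / 2))
    (p' := I * sin (θ / 2)) (q' := cos (θ / 2)) (y := cos θ)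
    (w := x * cos θ + I * (a * sin θ * cos ϕ))
    (by linear_combination a ^ 2 * hexp + ha)
    (by rw [hcos]; ring)
    (by linear_combination 2 * sin (θ / 2) ^ 2 * I_sq - hcos - 2 * sin_sq_add_cos_sq (θ / 2))
    (by rw [hpp', hqq']; linear_combination a * (I * sin θ) * two_cos ϕ) n
  rw [← hadd, hpp', hqq']
  congr 1
  refine sum_congr rfl fun m _ ↦ ?_
  have hmul : 2 * cos (m * ϕ) = exp (ϕ * I) ^ m + exp (-ϕ * I) ^ m := by
    rw [two_cos, ← exp_nat_mul, ← exp_nat_mul]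
    ring_nf
  linear_combination (n + m)! * (n - m)! * (a * (I * sin θ)) ^ m *
    (rodriguesCoeff n (n + m) x * rodriguesCoeff n (n + m) (cos θ)) * hmul

section LegendreFunctions

lemma iteratedDeriv_eval_eq_factorial_mul_coeff_taylor {𝕜 : Type*} [NontriviallyNormedField 𝕜]
    (f : 𝕜[X]) (k : ℕ) (x : 𝕜) :
    iteratedDeriv k (fun y ↦ f.eval y) x = k ! * (taylor x f).coeff k := by
  have hderiv : iteratedDeriv k (fun y ↦ f.eval y) = fun y ↦ (derivative^[k] f).eval y := by
    induction k with
    | zero => simp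
    | succ k ih =>
      rw [iteratedDeriv_succ, ih, Function.iterate_succ_apply']
      exact funext fun y ↦ Polynomial.deriv _
  rw [hderiv, taylor_coeff, ← factorial_smul_hasseDeriv]
  simp

lemma iteratedDeriv_sq_sub_one_pow {𝕜 : Type*} [NontriviallyNormedField 𝕜] (n k : ℕ) (x : 𝕜) :
    iteratedDeriv k (fun y : 𝕜 ↦ (y ^ 2 - 1) ^ n) x = k ! * rodriguesCoeff n k x := by
  rw [rodriguesCoeff, ← iteratedDeriv_eval_eq_factorial_mul_coeff_taylor]
  simp only [eval_pow, eval_sub, eval_X, eval_one]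

lemma legendreC_eq_rodriguesCoeff (ℓ : ℕ) (w : ℂ) :
    legendreC ℓ w = rodriguesCoeff ℓ ℓ w / 2 ^ ℓ := by
  have hfact : (ℓ ! : ℂ) ≠ 0 := Nat.cast_ne_zero.mpr ℓ.factorial_ne_zero
  rw [legendreC, iteratedDeriv_sq_sub_one_pow]
  field_simp

lemma ofReal_rodriguesCoeff (n k : ℕ) (x : ℝ) :
    ((rodriguesCoeff n k x : ℝ) : ℂ) = rodriguesCoeff n k (x : ℂ) :=
  map_rodriguesCoeff Complex.ofRealHom n k x

lemma ofReal_assocLegendre_eq_rodriguesCoeff (ℓ m : ℕ) {z : ℝ} (hz : 1 ≤ |z|) :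
    (assocLegendre ℓ m z : ℂ) =
      (ℓ + m)! / (2 ^ ℓ * ℓ !) * √(z ^ 2 - 1) ^ m * rodriguesCoeff ℓ (ℓ + m) (z : ℂ) := by
  have hsq : 0 ≤ z ^ 2 - 1 := sub_nonneg.mpr ((one_le_sq_iff_one_le_abs z).mpr hz)
  rw [assocLegendre, Real.rpow_div_two_eq_sqrt _ hsq, Real.rpow_natCast,
    iteratedDeriv_sq_sub_one_pow]
  push_cast [ofReal_rodriguesCoeff]
  ring

lemma ofReal_ferrers_cos_eq_rodriguesCoeff (ℓ m : ℕ) {θ : ℝ} (hθ : 0 ≤ Real.sin θ) :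
    (ferrers ℓ m (Real.cos θ) : ℂ) =
      (ℓ + m)! / (2 ^ ℓ * ℓ !) * (-Complex.sin θ) ^ m *
        rodriguesCoeff ℓ (ℓ + m) (Complex.cos θ) := by
  rw [ferrers, ← Real.sin_sq, Real.rpow_div_two_eq_sqrt _ (sq_nonneg _), Real.rpow_natCast,
    Real.sqrt_sq hθ, iteratedDeriv_sq_sub_one_pow, neg_pow (Complex.sin θ)]
  push_cast [ofReal_rodriguesCoeff]
  ring

lemma I_zpow_neg_mul_assocLegendre_mul_ferrers_cos (ℓ m : ℕ) {z θ : ℝ} (hz : 1 ≤ |z|)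
    (hθ : 0 ≤ Real.sin θ) :
    Complex.I ^ (-(m : ℤ)) * assocLegendre ℓ m z * ferrers ℓ m (Real.cos θ) =
      ((ℓ + m)! / (2 ^ ℓ * ℓ !)) ^ 2 * (√(z ^ 2 - 1) * (Complex.I * Complex.sin θ)) ^ m *
        (rodriguesCoeff ℓ (ℓ + m) (z : ℂ) * rodriguesCoeff ℓ (ℓ + m) (Complex.cos θ)) := by
  have hphase : Complex.I ^ (-(m : ℤ)) * (-Complex.sin θ) ^ m =
      (Complex.I * Complex.sin θ) ^ m := by
    rw [zpow_neg, zpow_natCast, ← inv_pow, Complex.inv_I, ← mul_pow, neg_mul_neg]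
  rw [ofReal_assocLegendre_eq_rodriguesCoeff ℓ m hz, ofReal_ferrers_cos_eq_rodriguesCoeff ℓ m hθ,
    mul_pow (√(z ^ 2 - 1) : ℂ), ← hphase]
  ring

end LegendreFunctions

theorem addition_theorem_upward_general (ℓ : ℕ) {z θ : ℝ} (ϕ : ℂ) (hz : 1 ≤ |z|)
    (hθ : 0 ≤ Real.sin θ) :
    legendreC ℓ z * ferrers ℓ 0 (Real.cos θ) +
        2 * ∑ m ∈ Icc 1 ℓ, ((ℓ - m)! / (ℓ + m)! : ℂ) * Complex.I ^ (-(m : ℤ)) *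
          assocLegendre ℓ m z * ferrers ℓ m (Real.cos θ) * Complex.cos (m * ϕ) =
      legendreC ℓ
        (z * Real.cos θ + Complex.I * (√(z ^ 2 - 1) * Real.sin θ * Complex.cos ϕ)) := by
  have hsqrt : (√(z ^ 2 - 1) : ℂ) ^ 2 = (z : ℂ) ^ 2 - 1 := by
    exact_mod_cast Real.sq_sqrt (sub_nonneg.mpr ((one_le_sq_iff_one_le_abs z).mpr hz))
  have hfact (k : ℕ) : (k ! : ℂ) ≠ 0 := Nat.cast_ne_zero.mpr k.factorial_ne_zero
  have hzero : legendreC ℓ z * ferrers ℓ 0 (Real.cos θ) = (1 / (2 ^ ℓ * ℓ !)) ^ 2 *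
      (ℓ ! * ℓ ! * (rodriguesCoeff ℓ ℓ (z : ℂ) * rodriguesCoeff ℓ ℓ (Complex.cos θ))) := by
    rw [legendreC_eq_rodriguesCoeff, ofReal_ferrers_cos_eq_rodriguesCoeff _ _ hθ, add_zero]
    field_simp [hfact]
  have hterm : ∀ m ∈ Icc 1 ℓ, 2 * (((ℓ - m)! / (ℓ + m)! : ℂ) * Complex.I ^ (-(m : ℤ)) *
        assocLegendre ℓ m z * ferrers ℓ m (Real.cos θ) * Complex.cos (m * ϕ)) =
      (1 / (2 ^ ℓ * ℓ !)) ^ 2 * ((ℓ + m)! * (ℓ - m)! *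
        (2 * (√(z ^ 2 - 1) * (Complex.I * Complex.sin θ)) ^ m * Complex.cos (m * ϕ)) *
        (rodriguesCoeff ℓ (ℓ + m) (z : ℂ) * rodriguesCoeff ℓ (ℓ + m) (Complex.cos θ))) := by
    intro m _
    rw [mul_assoc (_ / _), mul_assoc (_ / _),
      I_zpow_neg_mul_assocLegendre_mul_ferrers_cos ℓ m hz hθ]
    field_simp [hfact]
  rw [mul_sum, sum_congr rfl hterm, hzero, ← mul_sum, ← mul_add,
    rodriguesCoeff_addition_cos ℓ hsqrt θ ϕ, legendreC_eq_rodriguesCoeff, Complex.ofReal_cos,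
    Complex.ofReal_sin]
  field_simp [hfact]

/-- Addition theorem for the reference upward complex direction
(Proposition 4.3 of the paper):
`P_ℓ(z) 𝖯_ℓ(cos θ) + 2 Σ_{m=1}^{ℓ} ((ℓ−m)!/(ℓ+m)!) i^{−m} P_ℓ^m(z) 𝖯_ℓ^m(cos θ) cos(mϕ)
  = P_ℓ(z cos θ + i √(z²−1) sin θ cos ϕ)`. -/
theorem addition_theorem_upward (ℓ : ℕ) (z θ ϕ : ℝ) (hz : 1 ≤ z)
    (hθ : θ ∈ Set.Icc 0 Real.pi) :
    ((legendreC ℓ (z : ℂ)) * ((ferrers ℓ 0 (Real.cos θ) : ℝ) : ℂ)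
        + 2 * ∑ m ∈ Finset.Icc 1 ℓ,
            (((ℓ - m)! : ℂ) / ((ℓ + m)! : ℂ)) * Complex.I ^ (-(m : ℤ)) *
              ((assocLegendre ℓ m z : ℝ) : ℂ) * ((ferrers ℓ m (Real.cos θ) : ℝ) : ℂ) *
                ((Real.cos ((m : ℝ) * ϕ) : ℝ) : ℂ))
      = legendreC ℓ
          (((z * Real.cos θ : ℝ) : ℂ) +
            Complex.I * ((Real.sqrt (z ^ 2 - 1) * Real.sin θ * Real.cos ϕ : ℝ) : ℂ)) := by
  have h := addition_theorem_upward_general ℓ (z := z) ϕ (hz.trans (le_abs_self z))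
    (Real.sin_nonneg_of_mem_Icc hθ)
  simpa using h
end

section
/- Let m be a fixed natural number. Then, as ℓ → ∞ (with ℓ ≥ m), the ratio [ (2ℓ+1) · Γ(ℓ+1/2)² · Γ(2ℓ + 3/2) / ((ℓ+m)!·(ℓ−m)!) ] / [ 2·√(2π) · e^{−2ℓ} · (2ℓ)^{2ℓ+1} ] tends to 1. -/
open scoped Nat
open Filter

/-!
Euler's limit formula for `Γ` says that `Γ(ℓ + s + 1) ∼ ℓ! ℓ ^ s` unless `s` is a pole of `Γ`, and
the functional equation extends this to every real `s`. Apply it with `s = -1/2` and `s = ±t`, and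
at `2ℓ` with `s = 1/2`: the factors `ℓ!` and the powers `ℓ ^ (±t)` cancel, so the quotient is
`∼ 2 (2ℓ)! √(2ℓ)`, and Stirling's formula for `(2ℓ)!` concludes.
-/

open Asymptotics
open Real (Gamma)

lemma Gamma_add_natCast_eq_mul_prod {s : ℝ} (hs : ∀ k : ℕ, s ≠ -k) (n : ℕ) :
    Gamma (s + n) = Gamma s * ∏ j ∈ Finset.range n, (s + j) := by
  induction n with
  | zero => simp
  | succ n ih =>
    have hn : s + n ≠ 0 := fun h => hs n (eq_neg_of_add_eq_zero_left h)
    rw [Nat.cast_succ, ← add_assoc, Real.Gamma_add_one hn, ih, Finset.prod_range_succ]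
    ring

lemma isEquivalent_natCast_add_const (c : ℝ) :
    (fun n : ℕ => (n : ℝ) + c) ~[atTop] fun n => (n : ℝ) :=
  IsEquivalent.refl.add_const_of_norm_tendsto_atTop
    (tendsto_norm_atTop_atTop.comp tendsto_natCast_atTop_atTop)

lemma isEquivalent_Gamma_natCast_add_of_ne_neg_natCast {s : ℝ} (hs : ∀ k : ℕ, s ≠ -k) :
    (fun n : ℕ => Gamma (n + s + 1)) ~[atTop] fun n => (n ! : ℝ) * (n : ℝ) ^ s := by
  have hΓ : Gamma s ≠ 0 := Real.Gamma_ne_zero hs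
  have euler : Tendsto (fun n => Gamma s / Real.GammaSeq s n) atTop (nhds 1) := by
    rw [← div_self hΓ]
    exact tendsto_const_nhds.div (Real.GammaSeq_tendsto_Gamma s) hΓ
  refine isEquivalent_of_tendsto_one (euler.congr fun n => ?_)
  have hprod : Gamma (n + s + 1) = Gamma s * ∏ j ∈ Finset.range (n + 1), (s + j) := by
    rw [← Gamma_add_natCast_eq_mul_prod hs, Nat.cast_succ, add_comm (n : ℝ) s, add_assoc]
  rw [Pi.div_apply, hprod, Real.GammaSeq, div_div_eq_mul_div, mul_comm ((n : ℝ) ^ s)]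

lemma isEquivalent_Gamma_natCast_add_of_add_one {s : ℝ}
    (h : (fun n : ℕ => Gamma (n + (s + 1) + 1)) ~[atTop]
      fun n => (n ! : ℝ) * (n : ℝ) ^ (s + 1)) :
    (fun n : ℕ => Gamma (n + s + 1)) ~[atTop] fun n => (n ! : ℝ) * (n : ℝ) ^ s := by
  refine (h.div (isEquivalent_natCast_add_const (s + 1))).congr_left ?_ |>.congr_right ?_
  · filter_upwards [tendsto_natCast_atTop_atTop.eventually_gt_atTop (-(s + 1))] with n hn
    have hpos : n + (s + 1) ≠ 0 := by linarith
    rw [Pi.div_apply, Real.Gamma_add_one hpos, mul_div_cancel_left₀ _ hpos, add_assoc]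
  · filter_upwards [eventually_ne_atTop 0] with n hn
    have hn' : (n : ℝ) ≠ 0 := Nat.cast_ne_zero.2 hn
    rw [Pi.div_apply, Real.rpow_add_one hn', mul_div_assoc, mul_div_cancel_right₀ _ hn']

theorem isEquivalent_Gamma_natCast_add (s : ℝ) :
    (fun n : ℕ => Gamma (n + s + 1)) ~[atTop] fun n => (n ! : ℝ) * (n : ℝ) ^ s := by
  obtain ⟨k, hk⟩ := exists_nat_gt (-s)
  induction k generalizing s with
  | zero =>
    have hs : 0 < s := by simpa using hk
    exact isEquivalent_Gamma_natCast_add_of_ne_neg_natCast fun j =>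
      ((neg_nonpos.2 j.cast_nonneg).trans_lt hs).ne'
  | succ k ih =>
    refine isEquivalent_Gamma_natCast_add_of_add_one (ih (s + 1) ?_)
    push_cast at hk
    linarith

lemma isEquivalent_Gamma_add_mul_Gamma_sub (t : ℝ) :
    (fun n : ℕ => Gamma (n + t + 1) * Gamma (n - t + 1)) ~[atTop] fun n => (n ! : ℝ) ^ 2 := by
  refine ((isEquivalent_Gamma_natCast_add t).mul
    (isEquivalent_Gamma_natCast_add (-t))).congr_right ?_
  filter_upwards [eventually_gt_atTop 0] with n hn
  have hn' : (0 : ℝ) < n := Nat.cast_pos.2 hn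
  rw [Pi.mul_apply, mul_mul_mul_comm, ← Real.rpow_add hn', add_neg_cancel, Real.rpow_zero,
    mul_one, sq]

lemma isEquivalent_Gamma_natCast_add_half :
    (fun n : ℕ => Gamma (n + 1 / 2)) ~[atTop] fun n => (n ! : ℝ) / √n := by
  refine (isEquivalent_Gamma_natCast_add (-(1 / 2))).congr_left ?_ |>.congr_right ?_
  · exact .of_eq (funext fun n => by ring_nf)
  · refine .of_eq (funext fun n => ?_)
    rw [Real.rpow_neg n.cast_nonneg, ← Real.sqrt_eq_rpow, div_eq_mul_inv]

lemma isEquivalent_Gamma_natCast_add_three_halves :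
    (fun n : ℕ => Gamma (n + 3 / 2)) ~[atTop]
      fun n => √(2 * Real.pi) * Real.exp (-n) * (n : ℝ) ^ (n + 1) := by
  have hΓ : (fun n : ℕ => Gamma (n + 3 / 2)) ~[atTop] fun n => (n ! : ℝ) * √n :=
    (isEquivalent_Gamma_natCast_add (1 / 2)).congr_left (.of_eq (funext fun n => by ring_nf))
      |>.congr_right (.of_eq (funext fun n => by rw [Real.sqrt_eq_rpow]))
  refine hΓ.trans ((Stirling.factorial_isEquivalent_stirling.mul .refl).congr_right ?_)
  refine .of_eq (funext fun n => ?_)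
  have hsqrt : √(2 * n * Real.pi) * √n = √(2 * Real.pi) * n := by
    rw [mul_right_comm, Real.sqrt_mul (by positivity), mul_assoc,
      Real.mul_self_sqrt n.cast_nonneg]
  have hexp : (n / Real.exp 1) ^ n = Real.exp (-n) * (n : ℝ) ^ n := by
    rw [div_pow, ← Real.exp_nat_mul, mul_one, Real.exp_neg, div_eq_inv_mul]
  rw [Pi.mul_apply, mul_right_comm, hsqrt, hexp]
  ring

theorem gamma_factorial_ratio_tendsto_one_general (t : ℝ) :
    Tendsto (fun ℓ : ℕ =>
      ((2 * (ℓ : ℝ) + 1) * Gamma (ℓ + 1 / 2) ^ 2 * Gamma (2 * ℓ + 3 / 2) /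
          (Gamma (ℓ + t + 1) * Gamma (ℓ - t + 1))) /
        (2 * √(2 * Real.pi) * Real.exp (-(2 * ℓ)) * (2 * (ℓ : ℝ)) ^ (2 * ℓ + 1)))
      atTop (nhds 1) := by
  have hdouble : Tendsto (fun ℓ : ℕ => 2 * ℓ) atTop atTop := tendsto_id.const_mul_atTop' two_pos
  have hlinear : (fun ℓ : ℕ => 2 * (ℓ : ℝ) + 1) ~[atTop] fun ℓ => 2 * (ℓ : ℝ) := by
    simpa [Function.comp_def] using (isEquivalent_natCast_add_const 1).comp_tendsto hdouble
  have hhalf := isEquivalent_Gamma_natCast_add_half.pow 2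
  have hthree_halves : (fun ℓ : ℕ => Gamma (2 * ℓ + 3 / 2)) ~[atTop] fun ℓ =>
      √(2 * Real.pi) * Real.exp (-(2 * ℓ)) * (2 * (ℓ : ℝ)) ^ (2 * ℓ + 1) := by
    simpa [Function.comp_def] using
      isEquivalent_Gamma_natCast_add_three_halves.comp_tendsto hdouble
  have hratio := ((hlinear.mul hhalf).mul hthree_halves).div
    (isEquivalent_Gamma_add_mul_Gamma_sub t)
  refine (isEquivalent_iff_tendsto_one ?_).1 (hratio.congr_right ?_) <;>
    filter_upwards [eventually_gt_atTop 0] with ℓ hℓ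
  · positivity
  · have hℓ' : (0 : ℝ) < ℓ := Nat.cast_pos.2 hℓ
    simp only [Pi.div_apply, Pi.mul_apply, Pi.pow_apply, div_pow, Real.sq_sqrt hℓ'.le]
    field_simp

/-- For fixed `m`, as `ℓ → ∞`,
`(2ℓ+1) Γ(ℓ+1/2)² Γ(2ℓ+3/2) / ((ℓ+m)!(ℓ−m)!) ∼ 2 √(2π) e^{−2ℓ} (2ℓ)^{2ℓ+1}`
(Stirling-type asymptotics from the proof of Lemma 5.4 of the paper). -/
theorem gamma_factorial_ratio_tendsto_one (m : ℕ) :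
    Tendsto (fun ℓ : ℕ =>
      ((2 * (ℓ : ℝ) + 1) * Real.Gamma ((ℓ : ℝ) + 1 / 2) ^ 2 *
          Real.Gamma (2 * (ℓ : ℝ) + 3 / 2) / (((ℓ + m)! : ℝ) * ((ℓ - m)! : ℝ))) /
        (2 * Real.sqrt (2 * Real.pi) * Real.exp (-(2 * (ℓ : ℝ))) *
          (2 * (ℓ : ℝ)) ^ (2 * ℓ + 1)))
      atTop (nhds 1) := by
  refine (gamma_factorial_ratio_tendsto_one_general m).congr' ?_
  filter_upwards [eventually_ge_atTop m] with ℓ hℓ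
  rw [← Nat.cast_add, ← Nat.cast_sub hℓ, Real.Gamma_nat_eq_factorial, Real.Gamma_nat_eq_factorial]
end

section
/- Let κ > 0, ζ ≥ 0, θ₁ ∈ [0,π], θ₂, θ₃ ∈ [0,2π), set z := ζ/(2κ) + 1 and let d := R_θ · d↑(z) ∈ ℂ³ with R_θ the Euler rotation matrix and d↑ the reference upward complex direction. Let v := (sin θ₁ cos θ₂, sin θ₁ sin θ₂, cos θ₁) be the third column of R_θ and u := (cos θ₁ cos θ₂ cos θ₃ − sin θ₂ sin θ₃, cos θ₁ sin θ₂ cos θ₃ + cos θ₂ sin θ₃, −sin θ₁ cos θ₃) the first column of R_θ. Then for every x ∈ ℝ³, exp( i·κ·(d₁x₁ + d₂x₂ + d₃x₃) ) = exp( i·(ζ/2 + κ)·⟨v, x⟩ ) · exp( −√(ζ·(ζ/4 + κ))·⟨u, x⟩ ), where ⟨·,·⟩ is the Euclidean inner product on ℝ³. -/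
/-- Rotation matrix about the `y`-axis. -/
noncomputable def rotY (θ : ℝ) : Matrix (Fin 3) (Fin 3) ℝ :=
  !![Real.cos θ, 0, Real.sin θ; 0, 1, 0; -Real.sin θ, 0, Real.cos θ]

/-- Rotation matrix about the `z`-axis. -/
noncomputable def rotZ (θ : ℝ) : Matrix (Fin 3) (Fin 3) ℝ :=
  !![Real.cos θ, -Real.sin θ, 0; Real.sin θ, Real.cos θ, 0; 0, 0, 1]

/-- The Euler rotation matrix `R_θ = R_z(θ₂) R_y(θ₁) R_z(θ₃)` (z-y-z convention). -/
noncomputable def eulerR (θ₁ θ₂ θ₃ : ℝ) : Matrix (Fin 3) (Fin 3) ℝ :=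
  rotZ θ₂ * rotY θ₁ * rotZ θ₃

/-- The reference upward complex direction `d↑(z) = (i√(z²−1), 0, z) ∈ ℂ³`. -/
noncomputable def dUp (z : ℝ) : Fin 3 → ℂ :=
  ![Complex.I * (Real.sqrt (z ^ 2 - 1) : ℝ), 0, (z : ℂ)]

/-!
A real matrix with first column `u` and third column `v` sends `d↑(z)` to `d = i√(z² − 1) u + z v`,
so the exponent `iκ d·x` has imaginary part `κz ⟨v, x⟩` and real part `−κ√(z² − 1) ⟨u, x⟩`.
For `z = ζ/(2κ) + 1` one has `κz = ζ/2 + κ` and `(κz)² − κ² = ζ(ζ/4 + κ)`.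
-/

section

open Complex Matrix

theorem mulVec_dUp {n : Type*} (A : Matrix n (Fin 3) ℂ) (z : ℝ) :
    A *ᵥ dUp z = (I * (√(z ^ 2 - 1) : ℝ)) • A.col 0 + (z : ℂ) • A.col 2 := by
  ext i
  simp only [mulVec, dotProduct, dUp, Fin.sum_univ_three, cons_val, Pi.add_apply, Pi.smul_apply,
    col_apply, smul_eq_mul]
  ring

theorem mulVec_dUp_dotProduct {n : Type*} [Fintype n] (R : Matrix n (Fin 3) ℝ) (z : ℝ)
    (x : n → ℝ) :
    (R.map ofReal *ᵥ dUp z) ⬝ᵥ (fun i ↦ (x i : ℂ)) =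
      I * (√(z ^ 2 - 1) * (R.col 0 ⬝ᵥ x) : ℝ) + (z * (R.col 2 ⬝ᵥ x) : ℝ) := by
  have map_col_dotProduct (j : Fin 3) :
      (R.map ofReal).col j ⬝ᵥ (fun i ↦ (x i : ℂ)) = (R.col j ⬝ᵥ x : ℝ) :=
    (ofRealHom.map_dotProduct (R.col j) x).symm
  simp only [mulVec_dUp, add_dotProduct, smul_dotProduct, map_col_dotProduct, smul_eq_mul,
    ofReal_mul, mul_assoc]

theorem cexp_I_mul_mulVec_dUp_dotProduct {n : Type*} [Fintype n] (R : Matrix n (Fin 3) ℝ)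
    (κ z : ℝ) (x : n → ℝ) :
    cexp (I * κ * ((R.map ofReal *ᵥ dUp z) ⬝ᵥ fun i ↦ (x i : ℂ))) =
      cexp (I * (κ * z * (R.col 2 ⬝ᵥ x) : ℝ)) *
        cexp (-(κ * √(z ^ 2 - 1) * (R.col 0 ⬝ᵥ x) : ℝ)) := by
  rw [← Complex.exp_add, mulVec_dUp_dotProduct]
  congr 1
  push_cast
  linear_combination (κ * √(z ^ 2 - 1) * (R.col 0 ⬝ᵥ x : ℝ) : ℂ) * I_sq

theorem eulerR_eq (θ₁ θ₂ θ₃ : ℝ) :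
    eulerR θ₁ θ₂ θ₃ =
      !![Real.cos θ₁ * Real.cos θ₂ * Real.cos θ₃ - Real.sin θ₂ * Real.sin θ₃,
          -(Real.cos θ₁ * Real.cos θ₂ * Real.sin θ₃) - Real.sin θ₂ * Real.cos θ₃,
          Real.sin θ₁ * Real.cos θ₂;
        Real.cos θ₁ * Real.sin θ₂ * Real.cos θ₃ + Real.cos θ₂ * Real.sin θ₃,
          -(Real.cos θ₁ * Real.sin θ₂ * Real.sin θ₃) + Real.cos θ₂ * Real.cos θ₃,
          Real.sin θ₁ * Real.sin θ₂;
        -(Real.sin θ₁) * Real.cos θ₃, Real.sin θ₁ * Real.sin θ₃, Real.cos θ₁] := by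
  rw [eulerR, rotZ, rotY, rotZ, mul_fin_three, mul_fin_three]
  ext i j
  fin_cases i <;> fin_cases j <;>
    simp only [Fin.zero_eta, Fin.mk_one, Fin.reduceFinMk, of_apply, cons_val] <;> ring

theorem eulerR_col_zero (θ₁ θ₂ θ₃ : ℝ) :
    (eulerR θ₁ θ₂ θ₃).col 0 =
      ![Real.cos θ₁ * Real.cos θ₂ * Real.cos θ₃ - Real.sin θ₂ * Real.sin θ₃,
        Real.cos θ₁ * Real.sin θ₂ * Real.cos θ₃ + Real.cos θ₂ * Real.sin θ₃,
        -(Real.sin θ₁) * Real.cos θ₃] := by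
  rw [eulerR_eq]
  ext i
  fin_cases i <;> rfl

theorem eulerR_col_two (θ₁ θ₂ θ₃ : ℝ) :
    (eulerR θ₁ θ₂ θ₃).col 2 =
      ![Real.sin θ₁ * Real.cos θ₂, Real.sin θ₁ * Real.sin θ₂, Real.cos θ₁] := by
  rw [eulerR_eq]
  ext i
  fin_cases i <;> rfl

theorem evanescent_wave_explicit_form_general {n : Type*} [Fintype n] (R : Matrix n (Fin 3) ℝ)
    {κ ζ : ℝ} (hκ : 0 < κ) (hζ : 0 ≤ ζ) (x : n → ℝ) :
    cexp (I * κ * ((R.map ofReal *ᵥ dUp (ζ / (2 * κ) + 1)) ⬝ᵥ fun i ↦ (x i : ℂ))) =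
      cexp (I * ((ζ / 2 + κ) * (R.col 2 ⬝ᵥ x) : ℝ)) *
        cexp (-(√(ζ * (ζ / 4 + κ)) * (R.col 0 ⬝ᵥ x) : ℝ)) := by
  set z : ℝ := ζ / (2 * κ) + 1 with hz
  have one_le_z : 1 ≤ z := le_add_of_nonneg_left (by positivity)
  have wavenumber : κ * z = ζ / 2 + κ := by
    rw [hz]
    field_simp
  have decay_rate : κ * √(z ^ 2 - 1) = √(ζ * (ζ / 4 + κ)) :=
    calc κ * √(z ^ 2 - 1) = √(κ ^ 2 * (z ^ 2 - 1)) := by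
          rw [Real.sqrt_mul' _ (sub_nonneg.2 (one_le_pow₀ one_le_z)), Real.sqrt_sq hκ.le]
      _ = √((κ * z) ^ 2 - κ ^ 2) := by ring_nf
      _ = √(ζ * (ζ / 4 + κ)) := by
          rw [wavenumber]
          ring_nf
  rw [cexp_I_mul_mulVec_dUp_dotProduct, wavenumber, decay_rate]

end

/-- Explicit oscillation/decay form of an evanescent plane wave:
with `d = R_θ d↑(ζ/(2κ)+1)`, `v` the third column of `R_θ` (propagation direction) and
`u` its first column (decay direction), for all `x ∈ ℝ³`,
`exp(iκ d·x) = exp(i(ζ/2+κ)⟨v,x⟩) · exp(−√(ζ(ζ/4+κ))⟨u,x⟩)`. -/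
theorem evanescent_wave_explicit_form (κ ζ θ₁ θ₂ θ₃ : ℝ) (hκ : 0 < κ) (hζ : 0 ≤ ζ)
    (hθ₁ : θ₁ ∈ Set.Icc 0 Real.pi) (hθ₂ : θ₂ ∈ Set.Ico 0 (2 * Real.pi))
    (hθ₃ : θ₃ ∈ Set.Ico 0 (2 * Real.pi)) :
    let z : ℝ := ζ / (2 * κ) + 1
    let d : Fin 3 → ℂ := ((eulerR θ₁ θ₂ θ₃).map (Complex.ofReal)).mulVec (dUp z)
    let v : Fin 3 → ℝ :=
      ![Real.sin θ₁ * Real.cos θ₂, Real.sin θ₁ * Real.sin θ₂, Real.cos θ₁]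
    let w : Fin 3 → ℝ :=
      ![Real.cos θ₁ * Real.cos θ₂ * Real.cos θ₃ - Real.sin θ₂ * Real.sin θ₃,
        Real.cos θ₁ * Real.sin θ₂ * Real.cos θ₃ + Real.cos θ₂ * Real.sin θ₃,
        -(Real.sin θ₁) * Real.cos θ₃]
    ∀ x : Fin 3 → ℝ,
      Complex.exp (Complex.I * (κ : ℂ) *
          (d 0 * (x 0 : ℂ) + d 1 * (x 1 : ℂ) + d 2 * (x 2 : ℂ))) =
        Complex.exp (Complex.I *
            (((ζ / 2 + κ) * (v 0 * x 0 + v 1 * x 1 + v 2 * x 2) : ℝ) : ℂ)) *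
          Complex.exp
            (-(((Real.sqrt (ζ * (ζ / 4 + κ)) * (w 0 * x 0 + w 1 * x 1 + w 2 * x 2) : ℝ)) : ℂ)) := by
  intro _ _ _ _ x
  simpa only [eulerR_col_zero, eulerR_col_two, dotProduct, Fin.sum_univ_three] using
    evanescent_wave_explicit_form_general (eulerR θ₁ θ₂ θ₃) hκ hζ x
end
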